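/- Let M = (Q, A, τ) be a bi-reversible Mealy automaton (invertible, reversible, and with τ : Q × A → A × Q a bijection) and let u, v ∈ A* with v nonempty. Then the set of all finite prefixes of sequences in { s·(uv^ω) : s ∈ Q* } is a regular language over A, where uv^ω denotes the eventually periodic sequence u v v v ···. -/

import Mathlib

/-!
For a sequence `ξ` let `L(ξ)` be the set of prefixes of the sequences `s · ξ`, and let `σξ` be `ξ`
without its first letter. Deleting the first letter maps `L(ξ)` into `L(σξ)`. For `w ∈ L(σξ)` let
`P(w)` be the set of letters `c` with `cw ∈ L(ξ)`.

* Invertibility makes `Q*` act transitively on the words of a given length in `L(σξ)`, since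
  the inverse of a permutation of a finite set is one of its powers (`exists_actW_eq`).
* If `t · w = w'`, then `t` lifts through each letter `c` to some `t'` with `t' @ c = t`, and
  `c ↦ t' · c` is an injection `P(w) → P(w')` because `τ` is injective (`exists_pullback`). Hence
  `|P(w)|` depends only on the length of `w`.
* `P(wx) ⊆ P(w)`, so `|P(w)|` is non-increasing in the length and eventually constant. From some
  length `N` on, `P(wx) = P(w)` whenever `wx ∈ L(σξ)` (`exists_stable`), which says that `cw`
  has the same right extensions in `L(ξ)` as `w` has in `L(σξ)`.

An eventually periodic `ξ` has finitely many shifts, so one `N` serves for all of them. Then the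
residual of `w` in `L(ξ)` is determined by the last `N` letters of `w` and by a shift of `ξ`
(`append_mem_orbLan_iff`). There are finitely many residuals, and the Myhill–Nerode theorem gives
regularity.
-/

namespace AutGrp

/-- A Mealy automaton with state set `Q` and alphabet `A`:
`step q a = (q · a, q @ a)` (output letter, next state). -/
structure Mealy (Q A : Type*) where
  step : Q → A → A × Q

namespace Mealy

variable {Q A : Type*}

/-- The output letter `q · a`. -/
def o (M : Mealy Q A) (q : Q) (a : A) : A := (M.step q a).1

/-- The next state `q @ a`. -/
def t (M : Mealy Q A) (q : Q) (a : A) : Q := (M.step q a).2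

/-- Action of a single state on a word of letters: `q · w`. -/
def actA (M : Mealy Q A) : Q → List A → List A
  | _, [] => []
  | q, a :: w => M.o q a :: M.actA (M.t q a) w

/-- State reached from `q` after reading the word `w`: `q @ w`. -/
def stA (M : Mealy Q A) : Q → List A → Q
  | q, [] => q
  | q, a :: w => M.stA (M.t q a) w

/-- Action of a word of states on a word of letters: `s · u` (rightmost state acts first). -/
def actW (M : Mealy Q A) : List Q → List A → List A
  | [], u => u
  | q :: s, u => M.actA q (M.actW s u)

/-- Word of states reached after reading `u`: `s @ u`. -/
def stW (M : Mealy Q A) : List Q → List A → List Q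
  | [], _ => []
  | q :: s, u => M.stA q (M.actW s u) :: M.stW s u

/-- `M` is invertible if each state acts on `A` by a bijection. -/
def Invertible (M : Mealy Q A) : Prop := ∀ q : Q, Function.Bijective (M.o q)

/-- `M` is reversible if each letter acts on `Q` by a bijection. -/
def Reversible (M : Mealy Q A) : Prop := ∀ a : A, Function.Bijective (fun q => M.t q a)

theorem actA_append (M : Mealy Q A) (q : Q) (x y : List A) :
    M.actA q (x ++ y) = M.actA q x ++ M.actA (M.stA q x) y := by
  induction x generalizing q with
  | nil => simp [actA, stA]
  | cons a w ih => simp [actA, stA, ih]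

theorem stA_append (M : Mealy Q A) (q : Q) (x y : List A) :
    M.stA q (x ++ y) = M.stA (M.stA q x) y := by
  induction x generalizing q with
  | nil => simp [stA]
  | cons a w ih => simp [stA, ih]

theorem actW_append_states (M : Mealy Q A) (s u : List Q) (w : List A) :
    M.actW (s ++ u) w = M.actW s (M.actW u w) := by
  induction s with
  | nil => simp [actW]
  | cons q s ih => simp [actW, ih]

theorem actW_append (M : Mealy Q A) (s : List Q) (x y : List A) :
    M.actW s (x ++ y) = M.actW s x ++ M.actW (M.stW s x) y := by
  induction s with
  | nil => simp [actW, stW]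
  | cons q s ih => simp [actW, stW, ih, actA_append]

theorem stW_append (M : Mealy Q A) (s : List Q) (x y : List A) :
    M.stW s (x ++ y) = M.stW (M.stW s x) y := by
  induction s with
  | nil => simp [stW]
  | cons q s ih => simp [stW, actW, ih, actW_append, stA_append]

theorem actW_stW_congr (M : Mealy Q A) {p p' : List Q}
    (h : ∀ w : List A, M.actW p w = M.actW p' w) (u w : List A) :
    M.actW (M.stW p u) w = M.actW (M.stW p' u) w := by
  have h1 := M.actW_append p u w
  have h2 := M.actW_append p' u w
  rw [h u, h (u ++ w)] at h1
  rw [h1] at h2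
  exact List.append_cancel_left h2

/-- The congruence `~Q` on the free monoid `Q*`: two words of states are equivalent
iff they act identically on `A*`. -/
def conQ (M : Mealy Q A) : Con (FreeMonoid Q) where
  r s u := ∀ w : List A, M.actW s.toList w = M.actW u.toList w
  iseqv := ⟨fun _ _ => rfl, fun h w => (h w).symm, fun h1 h2 w => (h1 w).trans (h2 w)⟩
  mul' := by
    intro a b c d h1 h2 w
    simp only [FreeMonoid.toList_mul, actW_append_states]
    rw [h2 w, h1 (M.actW d.toList w)]

/-- The congruence `~A` on the free monoid `A*`: `u ~A v` iff `s @ u = s @ v` for all `s ∈ Q*`. -/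
def conA (M : Mealy Q A) : Con (FreeMonoid A) where
  r u v := ∀ s : List Q, M.stW s u.toList = M.stW s v.toList
  iseqv := ⟨fun _ _ => rfl, fun h s => (h s).symm, fun h1 h2 s => (h1 s).trans (h2 s)⟩
  mul' := by
    intro a b c d h1 h2 s
    simp only [FreeMonoid.toList_mul, stW_append]
    rw [h1 s, h2 (M.stW s b.toList)]

/-- The congruence `~D` on the free monoid `A*`: `u ~D v` iff `s @ u ~Q s @ v` for all `s ∈ Q*`. -/
def conD (M : Mealy Q A) : Con (FreeMonoid A) where
  r u v := ∀ (s : List Q) (w : List A),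
    M.actW (M.stW s u.toList) w = M.actW (M.stW s v.toList) w
  iseqv := ⟨fun _ _ _ => rfl, fun h s w => (h s w).symm,
    fun h1 h2 s w => (h1 s w).trans (h2 s w)⟩
  mul' := by
    intro a b c d h1 h2 s w
    simp only [FreeMonoid.toList_mul, stW_append]
    calc M.actW (M.stW (M.stW s a.toList) c.toList) w
        = M.actW (M.stW (M.stW s b.toList) c.toList) w :=
          M.actW_stW_congr (h1 s) c.toList w
      _ = M.actW (M.stW (M.stW s b.toList) d.toList) w := h2 _ w

/-- The automaton semigroup (monoid) `P_M = Q* / ~Q`. -/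
abbrev PM (M : Mealy Q A) : Type _ := M.conQ.Quotient

/-- The dual automaton semigroup (monoid) `D_M = A* / ~A`. -/
abbrev DM (M : Mealy Q A) : Type _ := M.conA.Quotient

/-- The monoid `D'_M = A* / ~D`. -/
abbrev DM' (M : Mealy Q A) : Type _ := M.conD.Quotient

/-- The class in `P_M` of a word of states. -/
def PMmk (M : Mealy Q A) (s : List Q) : M.PM := M.conQ.mk' (FreeMonoid.ofList s)

/-- The class in `D_M` of a word of letters. -/
def DMmk (M : Mealy Q A) (u : List A) : M.DM := M.conA.mk' (FreeMonoid.ofList u)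

/-- The class in `D'_M` of a word of letters. -/
def DM'mk (M : Mealy Q A) (u : List A) : M.DM' := M.conD.mk' (FreeMonoid.ofList u)

/-- `M` is self-invertible if `P_M` is a group. -/
def SelfInvertible (M : Mealy Q A) : Prop :=
  ∀ x : M.PM, ∃ y : M.PM, x * y = 1 ∧ y * x = 1

/-- The enriched automaton of an invertible automaton: states `Q ⊕ Q`, where `Sum.inl q` is `q`
and `Sum.inr q` is the formal inverse `q⁻¹`; `τ̃(q,a) = τ(q,a)` and
`τ̃(q⁻¹, q·a) = (a, (q@a)⁻¹)`. -/
noncomputable def enriched [Nonempty A] (M : Mealy Q A) : Mealy (Q ⊕ Q) A where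
  step := fun p b =>
    match p with
    | Sum.inl q => (M.o q b, Sum.inl (M.t q b))
    | Sum.inr q =>
        (Function.invFun (M.o q) b, Sum.inr (M.t q (Function.invFun (M.o q) b)))

/-- The monoid `Δ_M` presented by generators `Q ⊔ A` and relations `q a = (q·a)(q@a)`. -/
def deltaCon (M : Mealy Q A) : Con (FreeMonoid (Q ⊕ A)) :=
  conGen (fun w₁ w₂ => ∃ (q : Q) (a : A),
    w₁ = FreeMonoid.of (Sum.inl q) * FreeMonoid.of (Sum.inr a) ∧
    w₂ = FreeMonoid.of (Sum.inr (M.o q a)) * FreeMonoid.of (Sum.inl (M.t q a)))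

end Mealy

/-- Evaluation of a positive word in the letters `y` (for `true`) and `z` (for `false`). -/
def evalPair {S : Type*} [Monoid S] (y z : S) : List Bool → S
  | [] => 1
  | b :: l => (bif b then y else z) * evalPair y z l

/-- `y` and `z` freely generate a free subsemigroup of rank two: distinct nonempty
positive words in `y, z` represent distinct elements. -/
def IsFreePair {S : Type*} [Monoid S] (y z : S) : Prop :=
  ∀ l₁ l₂ : List Bool, l₁ ≠ [] → l₂ ≠ [] →
    evalPair y z l₁ = evalPair y z l₂ → l₁ = l₂

/-- `x` has infinite order: `{x, x², x³, …}` is infinite. -/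
def InfiniteOrder {S : Type*} [Monoid S] (x : S) : Prop :=
  (Set.range fun n : ℕ => x ^ (n + 1)).Infinite

/-- The length-`n` prefix of a sequence. -/
def seqTake {A : Type*} (ξ : ℕ → A) (n : ℕ) : List A := (List.range n).map ξ

/-- The `n`-th power `u^n` of a finite word. -/
def wpow {A : Type*} (u : List A) : ℕ → List A
  | 0 => []
  | n + 1 => u ++ wpow u n

/-- The eventually periodic sequence `u v v v ⋯`. -/
noncomputable def prePeriodic {A : Type*} [Nonempty A] (u v : List A) : ℕ → A :=
  fun n => if n < u.length then u.getD n (Classical.arbitrary A)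
    else v.getD ((n - u.length) % v.length) (Classical.arbitrary A)

/-- The periodic sequence `u^ω = u u u ⋯`. -/
noncomputable def periodic {A : Type*} [Nonempty A] (u : List A) : ℕ → A :=
  prePeriodic [] u

namespace Mealy

/-- The action of a word of states on a sequence: `s · ξ` is the sequence whose
length-`n` prefix is `s · (length-`n` prefix of `ξ`)`. -/
noncomputable def actSeq {Q A : Type*} [Nonempty A] (M : Mealy Q A)
    (s : List Q) (ξ : ℕ → A) : ℕ → A :=
  fun n => (M.actW s (seqTake ξ (n + 1))).getD n (Classical.arbitrary A)

/-- The language of all prefixes of the orbit of `a^ω` under `P_M`. -/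
def Lan {Q A : Type*} (M : Mealy Q A) (a : A) : Set (List A) :=
  {v | ∃ (k : ℕ) (s : List Q), v = M.actW s (List.replicate k a)}

/-- The degree of `v` in `Lan(a)`: the number of letters `b` with `v b ∈ Lan(a)`. -/
noncomputable def deg {Q A : Type*} (M : Mealy Q A) (a : A) (v : List A) : ℕ :=
  {b : A | v ++ [b] ∈ M.Lan a}.ncard

end Mealy

/-- A language is regular if it is recognized by a deterministic finite automaton. -/
def IsRegular {A : Type*} (L : Set (List A)) : Prop :=
  ∃ (σ : Type) (_ : Fintype σ) (dfa : DFA A σ), ∀ w : List A, w ∈ dfa.accepts ↔ w ∈ L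


/-! ### Words in the orbit of a sequence -/

namespace Mealy

variable {Q A : Type*}

theorem actA_length (M : Mealy Q A) (q : Q) (w : List A) : (M.actA q w).length = w.length := by
  induction w generalizing q with
  | nil => rfl
  | cons a w ih => simp [actA, ih]

theorem actW_length (M : Mealy Q A) (s : List Q) (w : List A) :
    (M.actW s w).length = w.length := by
  induction s with
  | nil => rfl
  | cons q s ih => simp [actW, actA_length, ih]

theorem seqTake_length (ξ : ℕ → A) (n : ℕ) : (seqTake ξ n).length = n := by simp [seqTake]

theorem seqTake_succ (ξ : ℕ → A) (n : ℕ) : seqTake ξ (n + 1) = seqTake ξ n ++ [ξ n] := by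
  simp [seqTake, List.range_succ]

/-- The sequence `ξ` with its first `j` letters deleted. -/
def shift (ξ : ℕ → A) (j : ℕ) : ℕ → A := fun n => ξ (n + j)

theorem seqTake_add (ξ : ℕ → A) (m n : ℕ) :
    seqTake ξ (m + n) = seqTake ξ m ++ seqTake (shift ξ m) n := by
  simp [seqTake, List.range_add, shift, Function.comp_def, add_comm]

/-- The sequence `s · ξ` has prefixes `s · (prefix of ξ)`: the fallback value in `actSeq` is never
used, as the action preserves lengths. -/
theorem seqTake_actSeq [Nonempty A] (M : Mealy Q A) (s : List Q) (ξ : ℕ → A) (n : ℕ) :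
    seqTake (M.actSeq s ξ) n = M.actW s (seqTake ξ n) := by
  induction n with
  | zero => exact (List.length_eq_zero_iff.1 (by simp [actW_length, seqTake])).symm
  | succ n ih =>
    have hl : (M.actW s (seqTake ξ n)).length = n := by rw [actW_length, seqTake_length]
    obtain ⟨b, hb⟩ := List.length_eq_one_iff.1
      (M.actW_length (M.stW s (seqTake ξ n)) [ξ n])
    rw [seqTake_succ, ih, actSeq, seqTake_succ, actW_append, hb]
    simp [List.getD_eq_getElem?_getD, hl]

/-- The set of finite prefixes of the sequences `s · ξ`, `s ∈ Q*`. -/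
def orbLan (M : Mealy Q A) (ξ : ℕ → A) : Set (List A) :=
  {w | ∃ s : List Q, w = M.actW s (seqTake ξ w.length)}

theorem seqTake_mem_orbLan (M : Mealy Q A) (ξ : ℕ → A) (n : ℕ) :
    seqTake ξ n ∈ M.orbLan ξ := ⟨[], by simp [actW, seqTake_length]⟩

theorem actW_mem_orbLan (M : Mealy Q A) (ξ : ℕ → A) (t : List Q) {w : List A}
    (hw : w ∈ M.orbLan ξ) : M.actW t w ∈ M.orbLan ξ := by
  obtain ⟨s, hs⟩ := hw
  refine ⟨t ++ s, ?_⟩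
  rw [actW_length, actW_append_states, ← hs]

theorem orbLan_split (M : Mealy Q A) (ξ : ℕ → A) {w x : List A} (h : w ++ x ∈ M.orbLan ξ) :
    w ∈ M.orbLan ξ ∧ x ∈ M.orbLan (shift ξ w.length) := by
  obtain ⟨s, hs⟩ := h
  rw [List.length_append, seqTake_add, actW_append] at hs
  obtain ⟨h1, h2⟩ := List.append_inj hs (by rw [actW_length, seqTake_length])
  exact ⟨⟨s, h1⟩, ⟨_, h2⟩⟩

/-! ### Transitivity on levels -/

theorem actA_injective (M : Mealy Q A) (hinv : M.Invertible) (q : Q) :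
    Function.Injective (M.actA q) := by
  intro x y h
  induction x generalizing q y with
  | nil => cases y with
    | nil => rfl
    | cons b y => simp [actA] at h
  | cons a x ih => cases y with
    | nil => simp [actA] at h
    | cons b y =>
      simp only [actA, List.cons.injEq] at h
      obtain rfl := (hinv q).1 h.1
      rw [ih _ h.2]

theorem iterate_actA (M : Mealy Q A) (q : Q) (n : ℕ) (x : List A) :
    (M.actA q)^[n] x = M.actW (List.replicate n q) x := by
  induction n with
  | zero => rfl
  | succ n ih => rw [Function.iterate_succ_apply', ih, List.replicate_succ, actW]

/-- The positive words of states act on each level `Aⁿ` as a group: since `Aⁿ` is finite, some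
positive power of a state `q` fixes a given word `y`, and the preceding power of `q` carries
`q · y` back to `y`. -/
theorem exists_actW_inverse [Finite A] (M : Mealy Q A) (hinv : M.Invertible) (s : List Q)
    (x : List A) : ∃ r : List Q, M.actW r (M.actW s x) = x := by
  induction s with
  | nil => exact ⟨[], rfl⟩
  | cons q s ih =>
    obtain ⟨r, hr⟩ := ih
    set y := M.actW s x with hy
    have hf : Set.Finite {l : List A | l.length = y.length} := List.finite_length_eq A _
    obtain ⟨i, -, j, -, hij, he⟩ := Set.infinite_univ.exists_ne_map_eq_of_mapsTo
      (f := fun n : ℕ => M.actW (List.replicate n q) y)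
      (fun n _ => M.actW_length _ y) hf
    wlog hlt : i < j generalizing i j
    · exact this j i hij.symm he.symm (by omega)
    obtain ⟨k, rfl⟩ := Nat.exists_eq_add_of_lt hlt
    simp only [← iterate_actA] at he
    rw [add_assoc, Function.iterate_add_apply] at he
    have h2 := (M.actA_injective hinv q).iterate i he
    rw [Function.iterate_succ_apply, iterate_actA] at h2
    exact ⟨r ++ List.replicate k q, by rw [actW, actW_append_states, ← h2, hr]⟩

theorem exists_actW_eq [Finite A] (M : Mealy Q A) (hinv : M.Invertible) (ξ : ℕ → A)
    {w₁ w₂ : List A} (h₁ : w₁ ∈ M.orbLan ξ) (h₂ : w₂ ∈ M.orbLan ξ)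
    (hl : w₁.length = w₂.length) : ∃ t, M.actW t w₁ = w₂ := by
  obtain ⟨s₁, e₁⟩ := h₁
  obtain ⟨s₂, e₂⟩ := h₂
  obtain ⟨r, hr⟩ := M.exists_actW_inverse hinv s₁ (seqTake ξ w₁.length)
  refine ⟨s₂ ++ r, ?_⟩
  rw [actW_append_states, e₁, hr, hl, ← e₂]

/-! ### Sets of left extensions -/

/-- A word of states `t` can be pulled back through every letter `c`: there is `t'` with
`t' @ c = t` (reversibility), and then `c ↦ t' · c` is injective because `τ` is. -/
theorem exists_pullback (M : Mealy Q A) (hrev : M.Reversible)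
    (hbij : Function.Bijective (fun p : Q × A => M.step p.1 p.2)) (t : List Q) :
    ∃ φ : A → A, Function.Injective φ ∧
      ∀ c, ∃ t', M.actW t' [c] = [φ c] ∧ M.stW t' [c] = t := by
  induction t with
  | nil => exact ⟨id, Function.injective_id, fun c => ⟨[], rfl, rfl⟩⟩
  | cons q s ih =>
    obtain ⟨φ, hφ, hs⟩ := ih
    choose g hg using fun c => (hrev c).2 q
    simp only at hg
    refine ⟨fun c => M.o (g (φ c)) (φ c), ?_, fun c => ?_⟩
    · intro a b hab
      have h : (g (φ a), φ a) = (g (φ b), φ b) := by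
        apply hbij.1
        exact Prod.ext hab ((hg (φ a)).trans (hg (φ b)).symm)
      exact hφ (Prod.ext_iff.1 h).2
    · obtain ⟨t', h1, h2⟩ := hs c
      exact ⟨g (φ c) :: t', by simp [actW, h1, actA], by simp [stW, h1, h2, stA, hg]⟩

/-- The letters `c` with `c :: w ∈ orbLan ξ`; here `w` is meant to lie in `orbLan (shift ξ 1)`. -/
def preds (M : Mealy Q A) (ξ : ℕ → A) (w : List A) : Set A := {c | c :: w ∈ M.orbLan ξ}

theorem preds_append_subset (M : Mealy Q A) (ξ : ℕ → A) (w x : List A) :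
    M.preds ξ (w ++ x) ⊆ M.preds ξ w := fun c hc =>
  (M.orbLan_split ξ (w := c :: w) (x := x) hc).1

theorem ncard_preds_le [Finite A] (M : Mealy Q A) (hinv : M.Invertible) (hrev : M.Reversible)
    (hbij : Function.Bijective (fun p : Q × A => M.step p.1 p.2)) (ξ η : ℕ → A)
    {w₁ w₂ : List A} (h₁ : w₁ ∈ M.orbLan η) (h₂ : w₂ ∈ M.orbLan η)
    (hl : w₁.length = w₂.length) : (M.preds ξ w₁).ncard ≤ (M.preds ξ w₂).ncard := by
  obtain ⟨t, rfl⟩ := M.exists_actW_eq hinv η h₁ h₂ hl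
  obtain ⟨φ, hφ, h⟩ := M.exists_pullback hrev hbij t
  refine Set.ncard_le_ncard_of_injOn φ (fun c hc => ?_) hφ.injOn (Set.toFinite _)
  obtain ⟨t', e1, e2⟩ := h c
  have := M.actW_mem_orbLan ξ t' hc
  rwa [← List.singleton_append, actW_append, e1, e2] at this

/-- The number of left extensions of a word of `orbLan (shift ξ 1)` depends only on its length and
is non-increasing in it; once it is constant, appending letters no longer changes the set of left
extensions. -/
theorem exists_stable [Finite A] (M : Mealy Q A) (hinv : M.Invertible) (hrev : M.Reversible)
    (hbij : Function.Bijective (fun p : Q × A => M.step p.1 p.2)) (ξ : ℕ → A) :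
    ∃ N, ∀ w x : List A, N ≤ w.length → w ++ x ∈ M.orbLan (shift ξ 1) →
      M.preds ξ (w ++ x) = M.preds ξ w := by
  set η := shift ξ 1
  let g : ℕ → ℕ := fun n => (M.preds ξ (seqTake η n)).ncard
  have hg : ∀ w ∈ M.orbLan η, (M.preds ξ w).ncard = g w.length := fun w hw =>
    le_antisymm
      (M.ncard_preds_le hinv hrev hbij ξ η hw (M.seqTake_mem_orbLan η _)
        (seqTake_length _ _).symm)
      (M.ncard_preds_le hinv hrev hbij ξ η (M.seqTake_mem_orbLan η _) hw
        (seqTake_length _ _))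
  have hanti : Antitone g := by
    intro m n hmn
    obtain ⟨k, rfl⟩ := Nat.exists_eq_add_of_le hmn
    refine Set.ncard_le_ncard ?_ (Set.toFinite _)
    rw [seqTake_add]
    exact M.preds_append_subset ξ _ _
  obtain ⟨N, hN⟩ := (wellFoundedGT_iff_monotone_chain_condition (α := ℕᵒᵈ)).1 inferInstance
    ⟨fun n => OrderDual.toDual (g n), fun a b h => hanti h⟩
  replace hN : ∀ m, N ≤ m → g N = g m := hN
  refine ⟨N, fun w x hw hx => ?_⟩
  refine Set.eq_of_subset_of_ncard_le (M.preds_append_subset ξ w x) ?_ (Set.toFinite _)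
  have hwx : N ≤ (w ++ x).length := by rw [List.length_append]; omega
  rw [hg _ hx, hg _ (M.orbLan_split η hx).1, ← hN _ hw, ← hN _ hwx]

/-! ### Finiteness of the set of residuals -/

theorem shift_shift (ξ : ℕ → A) (i j : ℕ) : shift (shift ξ i) j = shift ξ (i + j) := by
  funext n
  simp only [shift]
  congr 1
  omega

/-- Once the sets of left extensions are stable from length `N` on, the residual of a word is
unchanged when a prefix is deleted, as long as `N` letters remain. -/
theorem append_mem_orbLan_iff (M : Mealy Q A) (ξ : ℕ → A) (N : ℕ)
    (hN : ∀ j, ∀ w x : List A, N ≤ w.length → w ++ x ∈ M.orbLan (shift ξ (j + 1)) →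
      M.preds (shift ξ j) (w ++ x) = M.preds (shift ξ j) w)
    (y z x : List A) (hz : N ≤ z.length) (j : ℕ) (hyz : y ++ z ∈ M.orbLan (shift ξ j)) :
    y ++ z ++ x ∈ M.orbLan (shift ξ j) ↔ z ++ x ∈ M.orbLan (shift ξ (j + y.length)) := by
  induction y generalizing j with
  | nil => simp
  | cons c y ih =>
    have htail : ∀ w, c :: w ∈ M.orbLan (shift ξ j) → w ∈ M.orbLan (shift ξ (j + 1)) := by
      intro w hw
      have := (M.orbLan_split _ (w := [c]) (x := w) hw).2
      rwa [shift_shift] at this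
    rw [show j + (c :: y).length = j + 1 + y.length by simp; omega, ← ih _ (htail _ hyz)]
    refine ⟨fun h => htail _ h, fun h => ?_⟩
    have := hN j (y ++ z) x (by simp; omega) h
    exact this.symm.subset hyz

theorem finite_range_shift [Nonempty A] (u v : List A) (hv : v ≠ []) :
    (Set.range (shift (prePeriodic u v))).Finite := by
  have hv' : 0 < v.length := List.length_pos_iff.2 hv
  refine ((Set.finite_lt_nat (u.length + v.length)).image
    (shift (prePeriodic u v))).subset ?_
  rintro _ ⟨j, rfl⟩
  induction j using Nat.strong_induction_on with
  | _ j ih =>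
    by_cases hj : j < u.length + v.length
    · exact ⟨j, hj, rfl⟩
    · convert ih (j - v.length) (by omega) using 1
      funext n
      simp only [shift, prePeriodic]
      rw [if_neg (by omega), if_neg (by omega),
        show n + j - u.length = n + (j - v.length) - u.length + v.length by omega,
        Nat.add_mod_right]

end Mealy

/-- For a bi-reversible Mealy automaton `M` and words `u, v ∈ A*` with
`v` nonempty, the set of all finite prefixes of sequences in `{ s·(u v^ω) : s ∈ Q* }` is a
regular language. -/
theorem stmt19 {Q A : Type*} [Fintype Q] [Nonempty Q] [Fintype A] [Nonempty A]
    (M : Mealy Q A) (hinv : M.Invertible) (hrev : M.Reversible)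
    (hbij : Function.Bijective (fun p : Q × A => M.step p.1 p.2))
    (u v : List A) (hv : v ≠ []) :
    IsRegular {w : List A | ∃ s : List Q,
      w = seqTake (M.actSeq s (prePeriodic u v)) w.length} := by
  classical
  have hshift := Mealy.finite_range_shift u v hv
  have hset : {w : List A | ∃ s : List Q,
      w = seqTake (M.actSeq s (prePeriodic u v)) w.length} = M.orbLan (prePeriodic u v) := by
    simp only [Mealy.seqTake_actSeq, Mealy.orbLan]
  rw [hset]
  generalize prePeriodic u v = ξ at hshift ⊢
  -- A stability bound common to the finitely many shifts of `ξ`.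
  choose N₀ hN₀ using M.exists_stable hinv hrev hbij
  obtain ⟨N, hN⟩ := (hshift.image N₀).bddAbove
  have hstab : ∀ j, ∀ w x : List A, N ≤ w.length →
      w ++ x ∈ M.orbLan (Mealy.shift ξ (j + 1)) →
      M.preds (Mealy.shift ξ j) (w ++ x) = M.preds (Mealy.shift ξ j) w := by
    intro j w x hw hx
    refine hN₀ _ w x (le_trans (hN ⟨_, ⟨j, rfl⟩, rfl⟩) hw) ?_
    rwa [Mealy.shift_shift]
  let L : Language A := M.orbLan ξ
  have hfin : (Set.range L.leftQuotient).Finite := by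
    refine (((hshift.prod (List.finite_length_le A N)).image
      (fun p => ({x | p.2 ++ x ∈ M.orbLan p.1} : Set (List A)))).union
      (Set.finite_singleton (∅ : Set (List A)))).subset ?_
    rintro _ ⟨w, rfl⟩
    by_cases hw : w ∈ M.orbLan ξ
    · left
      rcases le_total w.length N with h | h
      · exact ⟨(Mealy.shift ξ 0, w), ⟨⟨0, rfl⟩, h⟩, rfl⟩
      · refine ⟨(Mealy.shift ξ (w.length - N), w.drop (w.length - N)),
          ⟨⟨_, rfl⟩, by simp; omega⟩, ?_⟩
        ext x
        have key := M.append_mem_orbLan_iff ξ N hstab (w.take (w.length - N))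
          (w.drop (w.length - N)) x (by simp; omega) 0
          (by rw [List.take_append_drop]; exact hw)
        rw [List.take_append_drop, List.length_take, Nat.zero_add,
          min_eq_left (Nat.sub_le _ _)] at key
        exact key.symm
    · right
      refine Set.eq_empty_of_forall_notMem fun x hx => hw ?_
      exact (M.orbLan_split ξ (w := w) (x := x) hx).1
  obtain ⟨σ, hσ, dfa, hd⟩ := Language.isRegular_iff_finite_range_leftQuotient.2 hfin
  exact ⟨σ, hσ, dfa, fun w => by rw [hd]; rfl⟩

end AutGrp
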